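/- For every positive integer m and every real number β, the Duffing boundary value problem for (m, β) has a solution: there exist a real number T > 0 and a C^∞ function f : [-T, T] → ℝ such that f''(t) = -f(t)³ + β·f(t) for all t ∈ [-T, T], f(-T) = f(T) = 0, f'(-T) = m, f'(T) = -m, and f(t) > 0 for all t ∈ (-T, T). -/

import Mathlib

/-!
The energy identity `f'² = v² + β f² - f⁴ / 2` of a solution with boundary slope `v` factors as
`f'² = (A² - f²) (b + f²) / 2`, where `A² - b = 2 β` and `A² b = 2 v²`. Writing `f = A cos φ` turns
the problem into the first-order autonomous equation `φ' = √((b + A² cos² φ) / 2)`. Its right-hand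
side is positive and bounded, so `φ` is the inverse of the primitive of its reciprocal: an
increasing bijection of `ℝ`, which therefore passes from `-π / 2` to `π / 2` in finite time.
-/

open Real

/-- The Duffing boundary value problem for `(m, β)`: a time `T > 0` and a `C^∞` function
`f` with `f'' = -f³ + β·f` on `[-T, T]`, boundary values `f(±T) = 0`,
`f'(-T) = m`, `f'(T) = -m`, and `f > 0` on `(-T, T)`. -/
def IsDuffingSolution (m : ℕ) (β T : ℝ) (f : ℝ → ℝ) : Prop :=
  0 < T ∧ ContDiff ℝ (⊤ : ℕ∞) f ∧
    (∀ t ∈ Set.Icc (-T) T, deriv (deriv f) t = -(f t) ^ 3 + β * f t) ∧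
    f (-T) = 0 ∧ f T = 0 ∧ deriv f (-T) = (m : ℝ) ∧ deriv f T = -(m : ℝ) ∧
    (∀ t ∈ Set.Ioo (-T) T, 0 < f t)

open Filter Set
open scoped ContDiff

lemma contDiff_infty_of_forall_hasDerivAt_comp {𝕜 E : Type*} [NontriviallyNormedField 𝕜]
    [NormedAddCommGroup E] [NormedSpace 𝕜 E] {g : E → E} {φ : 𝕜 → E} (hg : ContDiff 𝕜 ∞ g)
    (hφ : ∀ t, HasDerivAt φ (g (φ t)) t) : ContDiff 𝕜 ∞ φ := by
  have hdiff : Differentiable 𝕜 φ := fun t => (hφ t).differentiableAt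
  have hderiv : deriv φ = g ∘ φ := funext fun t => (hφ t).deriv
  refine contDiff_infty.2 fun n => ?_
  induction n with
  | zero => exact contDiff_zero.2 hdiff.continuous
  | succ n ih =>
    rw [Nat.cast_succ, contDiff_succ_iff_deriv, hderiv]
    exact ⟨hdiff, by simp, (contDiff_infty.1 hg n).comp ih⟩

lemma surjective_of_forall_le_deriv {G : ℝ → ℝ} {c : ℝ} (hG : Differentiable ℝ G) (hc : 0 < c)
    (hderiv : ∀ x, c ≤ deriv G x) : Function.Surjective G := by
  have hgrowth : ∀ ⦃x y⦄, x ≤ y → c * (y - x) ≤ G y - G x :=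
    mul_sub_le_image_sub_of_le_deriv hG hderiv
  have htop : Tendsto (fun x => c * x + G 0) atTop atTop :=
    tendsto_atTop_add_const_right _ _ (tendsto_id.const_mul_atTop hc)
  have hbot : Tendsto (fun x => c * x + G 0) atBot atBot :=
    tendsto_atBot_add_const_right _ _ (tendsto_id.const_mul_atBot hc)
  refine hG.continuous.surjective (tendsto_atTop_mono' _ ?_ htop) (tendsto_atBot_mono' _ ?_ hbot)
  · filter_upwards [eventually_ge_atTop 0] with x hx
    linarith [hgrowth hx]
  · filter_upwards [eventually_le_atBot 0] with x hx
    linarith [hgrowth hx]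

section AutonomousEquation

/-- The signed time that a solution of the scalar autonomous equation `φ' = g φ` takes to travel
from `0` to `x`, meaningful for `g` continuous and nowhere zero. Its inverse solves the
equation. -/
noncomputable def travelTime (g : ℝ → ℝ) (x : ℝ) : ℝ :=
  ∫ s in (0 : ℝ)..x, (g s)⁻¹

variable {g : ℝ → ℝ}

lemma hasDerivAt_travelTime (hg : Continuous g) (hne : ∀ x, g x ≠ 0) (x : ℝ) :
    HasDerivAt (travelTime g) (g x)⁻¹ x :=
  (hg.inv₀ hne).integral_hasStrictDerivAt 0 x |>.hasDerivAt

lemma strictMono_travelTime (hg : Continuous g) (hpos : ∀ x, 0 < g x) :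
    StrictMono (travelTime g) :=
  strictMono_of_hasDerivAt_pos (hasDerivAt_travelTime hg fun x => (hpos x).ne')
    fun x => inv_pos.2 (hpos x)

lemma surjective_travelTime (hg : Continuous g) (hpos : ∀ x, 0 < g x) (hbdd : BddAbove (range g)) :
    Function.Surjective (travelTime g) := by
  obtain ⟨M, hM⟩ := hbdd
  have hgM : ∀ x, g x ≤ M := fun x => hM (mem_range_self x)
  have hderiv := hasDerivAt_travelTime hg fun x => (hpos x).ne'
  refine surjective_of_forall_le_deriv (fun x => (hderiv x).differentiableAt)
    (inv_pos.2 ((hpos 0).trans_le (hgM 0))) fun x => ?_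
  rw [(hderiv x).deriv]
  exact inv_anti₀ (hpos x) (hgM x)

theorem exists_orderIso_forall_hasDerivAt (hg : Continuous g) (hpos : ∀ x, 0 < g x)
    (hbdd : BddAbove (range g)) : ∃ φ : ℝ ≃o ℝ, ∀ t, HasDerivAt φ (g (φ t)) t := by
  let τ : ℝ ≃o ℝ := (strictMono_travelTime hg hpos).orderIsoOfSurjective _
    (surjective_travelTime hg hpos hbdd)
  refine ⟨τ.symm, fun t => ?_⟩
  simpa using (hasDerivAt_travelTime hg (fun x => (hpos x).ne') (τ.symm t)).of_local_left_inverse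
    τ.symm.continuous.continuousAt (inv_pos.2 (hpos _)).ne' (.of_forall τ.apply_symm_apply)

theorem exists_orderIso_forall_hasDerivAt_of_lt (hg : Continuous g) (hpos : ∀ x, 0 < g x)
    (hbdd : BddAbove (range g)) {x y : ℝ} (hxy : x < y) :
    ∃ T > 0, ∃ φ : ℝ ≃o ℝ, (∀ t, HasDerivAt φ (g (φ t)) t) ∧ φ (-T) = x ∧ φ T = y := by
  obtain ⟨ψ, hψ⟩ := exists_orderIso_forall_hasDerivAt hg hpos hbdd
  let c := (ψ.symm y + ψ.symm x) / 2
  let T := (ψ.symm y - ψ.symm x) / 2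
  have hleft : -T + c = ψ.symm x := by ring
  have hright : T + c = ψ.symm y := by ring
  exact ⟨T, half_pos (sub_pos.2 (ψ.symm.strictMono hxy)), (OrderIso.addRight c).trans ψ,
    fun t => (hψ (t + c)).comp_add_const t c, ψ.eq_symm_apply.1 hleft, ψ.eq_symm_apply.1 hright⟩

lemma hasDerivAt_sqrt_comp_of_hasDerivAt_sqrt {q φ : ℝ → ℝ} {q' t : ℝ} (hq : HasDerivAt q q' (φ t))
    (hpos : 0 < q (φ t)) (hφ : HasDerivAt φ (√(q (φ t))) t) :
    HasDerivAt (fun s => √(q (φ s))) (q' / 2) t := by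
  have hsqrt : √(q (φ t)) ≠ 0 := (sqrt_pos.2 hpos).ne'
  exact ((hq.comp t hφ).sqrt hpos.ne').congr_deriv (by simp only [Function.comp_apply]; field_simp)

end AutonomousEquation

section DuffingPhase

/-- The square of the angular speed `φ'` at phase `x` of a Duffing oscillation `A cos φ`. The
energy identity `f'² = (A² - f²) (b + f²) / 2` for `f = A cos φ` reads
`φ'² = duffingPhaseSpeedSq A b φ`. -/
noncomputable def duffingPhaseSpeedSq (A b x : ℝ) : ℝ :=
  (b + A ^ 2 * cos x ^ 2) / 2

variable {A b : ℝ}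

lemma duffingPhaseSpeedSq_pos (hb : 0 < b) (x : ℝ) : 0 < duffingPhaseSpeedSq A b x := by
  unfold duffingPhaseSpeedSq
  positivity

lemma duffingPhaseSpeedSq_le (x : ℝ) : duffingPhaseSpeedSq A b x ≤ (b + A ^ 2) / 2 := by
  unfold duffingPhaseSpeedSq
  gcongr
  exact mul_le_of_le_one_right (sq_nonneg A) (cos_sq_le_one x)

lemma contDiff_duffingPhaseSpeedSq {n : ℕ∞ω} : ContDiff ℝ n (duffingPhaseSpeedSq A b) := by
  unfold duffingPhaseSpeedSq
  fun_prop

lemma hasDerivAt_duffingPhaseSpeedSq (x : ℝ) :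
    HasDerivAt (duffingPhaseSpeedSq A b) (-(A ^ 2 * cos x * sin x)) x :=
  (((((hasDerivAt_cos x).pow 2).const_mul (A ^ 2)).const_add b).div_const 2).congr_deriv
    (by push_cast; ring)

lemma mul_sqrt_duffingPhaseSpeedSq_of_cos_eq_zero {v x : ℝ} (hA : 0 ≤ A) (hv : 0 ≤ v)
    (hAb : A ^ 2 * b = 2 * v ^ 2) (hx : cos x = 0) : A * √(duffingPhaseSpeedSq A b x) = v := by
  calc A * √(duffingPhaseSpeedSq A b x) = √(A ^ 2 * duffingPhaseSpeedSq A b x) := by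
        rw [sqrt_mul (sq_nonneg A), sqrt_sq hA]
    _ = √(v ^ 2) := by
        congr 1
        simp only [duffingPhaseSpeedSq, hx]
        linear_combination hAb / 2
    _ = v := sqrt_sq hv

lemma exists_sq_sub_eq_and_sq_mul_eq (β : ℝ) {v : ℝ} (hv : 0 < v) :
    ∃ A > 0, ∃ b > 0, A ^ 2 - b = 2 * β ∧ A ^ 2 * b = 2 * v ^ 2 := by
  set r := √(β ^ 2 + 2 * v ^ 2)
  have hr : r ^ 2 = β ^ 2 + 2 * v ^ 2 := sq_sqrt (by positivity)
  have hβr : |β| < r := lt_sqrt_of_sq_lt (by rw [sq_abs]; nlinarith)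
  obtain ⟨hneg, hlt⟩ := abs_lt.1 hβr
  have hrβ : 0 < r + β := by linarith
  refine ⟨√(r + β), sqrt_pos.2 hrβ, r - β, sub_pos.2 hlt, ?_, ?_⟩ <;> rw [sq_sqrt hrβ.le]
  · ring
  · linear_combination hr

lemma exists_orderIso_duffingPhase (A : ℝ) (hb : 0 < b) :
    ∃ T > 0, ∃ φ : ℝ ≃o ℝ, ContDiff ℝ ∞ φ ∧
      (∀ t, HasDerivAt φ (√(duffingPhaseSpeedSq A b (φ t))) t) ∧
      φ (-T) = -(π / 2) ∧ φ T = π / 2 := by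
  have hpos : ∀ x, 0 < duffingPhaseSpeedSq A b x := duffingPhaseSpeedSq_pos hb
  have hsmooth : ContDiff ℝ ∞ fun x => √(duffingPhaseSpeedSq A b x) :=
    contDiff_duffingPhaseSpeedSq.sqrt fun x => (hpos x).ne'
  have hbdd : BddAbove (range fun x => √(duffingPhaseSpeedSq A b x)) :=
    ⟨_, forall_mem_range.2 fun x => sqrt_le_sqrt (duffingPhaseSpeedSq_le x)⟩
  obtain ⟨T, hT, φ, hφ, hboundary⟩ := exists_orderIso_forall_hasDerivAt_of_lt hsmooth.continuous
    (fun x => sqrt_pos.2 (hpos x)) hbdd (neg_lt_self pi_div_two_pos)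
  exact ⟨T, hT, φ, contDiff_infty_of_forall_hasDerivAt_comp hsmooth hφ, hφ, hboundary⟩

variable {φ : ℝ → ℝ}

lemma deriv_mul_cos_duffingPhase
    (hφ : ∀ t, HasDerivAt φ (√(duffingPhaseSpeedSq A b (φ t))) t) :
    deriv (fun t => A * cos (φ t)) =
      fun t => -(sin (φ t) * (A * √(duffingPhaseSpeedSq A b (φ t)))) :=
  funext fun t => ((hφ t).cos.const_mul A).deriv.trans (by ring)

lemma deriv_deriv_mul_cos_duffingPhase (hb : 0 < b)
    (hφ : ∀ t, HasDerivAt φ (√(duffingPhaseSpeedSq A b (φ t))) t) (t : ℝ) :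
    deriv (deriv fun t => A * cos (φ t)) t =
      -(A * cos (φ t)) ^ 3 + (A ^ 2 - b) / 2 * (A * cos (φ t)) := by
  have hpos : 0 < duffingPhaseSpeedSq A b (φ t) := duffingPhaseSpeedSq_pos hb (φ t)
  have hspeed : HasDerivAt (fun s => √(duffingPhaseSpeedSq A b (φ s)))
      (-(A ^ 2 * cos (φ t) * sin (φ t)) / 2) t :=
    hasDerivAt_sqrt_comp_of_hasDerivAt_sqrt (hasDerivAt_duffingPhaseSpeedSq (φ t)) hpos (hφ t)
  have hsq : √(duffingPhaseSpeedSq A b (φ t)) ^ 2 = (b + A ^ 2 * cos (φ t) ^ 2) / 2 :=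
    sq_sqrt hpos.le
  rw [deriv_mul_cos_duffingPhase hφ]
  refine ((hφ t).sin.mul (hspeed.const_mul A)).neg.deriv.trans ?_
  linear_combination (-A * cos (φ t)) * hsq +
    (A ^ 3 * cos (φ t) / 2) * sin_sq_add_cos_sq (φ t)

end DuffingPhase

theorem duffing_bvp_existence_general (v : ℝ) (hv : 0 < v) (β : ℝ) :
    ∃ (T : ℝ) (f : ℝ → ℝ), 0 < T ∧ ContDiff ℝ ∞ f ∧
      (∀ t, deriv (deriv f) t = -(f t) ^ 3 + β * f t) ∧
      f (-T) = 0 ∧ f T = 0 ∧ deriv f (-T) = v ∧ deriv f T = -v ∧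
      ∀ t ∈ Ioo (-T) T, 0 < f t := by
  obtain ⟨A, hA, b, hb, hsub, hmul⟩ := exists_sq_sub_eq_and_sq_mul_eq β hv
  obtain ⟨T, hT, φ, hsmooth, hφ, hleft, hright⟩ := exists_orderIso_duffingPhase A hb
  have hderiv := deriv_mul_cos_duffingPhase hφ
  have hslope : ∀ x, cos x = 0 → A * √(duffingPhaseSpeedSq A b x) = v := fun x =>
    mul_sqrt_duffingPhaseSpeedSq_of_cos_eq_zero hA.le hv.le hmul
  refine ⟨T, fun t => A * cos (φ t), hT, contDiff_const.mul hsmooth.cos, fun t => ?_,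
    by simp [hleft], by simp [hright], ?_, ?_, fun t ht => mul_pos hA (cos_pos_of_mem_Ioo ?_)⟩
  · rw [deriv_deriv_mul_cos_duffingPhase hb hφ, hsub, mul_div_cancel_left₀ β two_ne_zero]
  · simp [hderiv, hleft, hslope (-(π / 2)) (by simp)]
  · simp [hderiv, hright, hslope (π / 2) cos_pi_div_two]
  · exact ⟨hleft ▸ φ.strictMono ht.1, hright ▸ φ.strictMono ht.2⟩

/-- Existence of solutions to the Duffing boundary value problem. -/
theorem duffing_bvp_existence (m : ℕ) (hm : 0 < m) (β : ℝ) :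
    ∃ (T : ℝ) (f : ℝ → ℝ), IsDuffingSolution m β T f := by
  obtain ⟨T, f, hT, hf, hode, hbc⟩ := duffing_bvp_existence_general m (Nat.cast_pos.2 hm) β
  exact ⟨T, f, hT, hf, fun t _ => hode t, hbc⟩
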